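/- arXiv:1809.09814 — 3 statements merged into one kernel-verified Lean document; each statement's English description precedes it below -/
import Mathlib

section
/- Characterization of the dual cone of the SOCP relaxation cone: an n×n real symmetric matrix Y belongs to the dual cone C₂* (with respect to the trace inner product) if and only if there exist 2×2 real symmetric positive semidefinite matrices Hᵢⱼ for all i, j ∈ {1,…,n} such that Y = Σ_{i,j} [eᵢ, eⱼ] Hᵢⱼ [eᵢ, eⱼ]ᵀ, where [eᵢ, eⱼ] is the n×2 matrix whose columns are the standard basis vectors eᵢ and eⱼ. -/
/-!
The matrices `∑ᵢⱼ [eᵢ, eⱼ] Hᵢⱼ [eᵢ, eⱼ]ᵀ` with positive semidefinite `2 × 2` blocks form a convex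
cone (`blockCone`), and the pairing of such a matrix with `G` is the sum over `i, j` of the
pairings of `Hᵢⱼ` with the principal `{i, j}` blocks of `G` (`pairing_assemble`). Membership in
`C₂` says exactly that all these principal blocks are positive semidefinite; hence `blockCone` is
contained in the dual of `C₂`, and every symmetric `G` that is nonnegative on `blockCone` is in
`C₂` (`mem_coneC2_of_pairing`).

The other inclusion is the bipolar theorem: a `Y` outside `blockCone` is separated from it by a
linear functional, whose symmetrised negative lies in `C₂` and pairs negatively with `Y`. This
requires `blockCone` to be closed (`isClosed_blockCone`): once the degenerate blocks `Hᵢᵢ` are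
normalised, the trace of the assembled matrix bounds all the blocks, so a limit of assembled
matrices lies in the continuous image of a compact set of block families.
-/

open Matrix

noncomputable section

/-- Euclidean (ℓ₂) norm of a finite real vector. -/
def vecNorm {k : ℕ} (u : Fin k → ℝ) : ℝ := Real.sqrt (∑ i, u i ^ 2)

/-- The matrix pencil `p(x, X) = F₀ + ∑ₖ xₖ Kₖ + ∑ᵢ ∑ⱼ Xᵢⱼ Lᵢⱼ`. -/
def pencil {n m : ℕ} (F0 : Matrix (Fin m) (Fin m) ℝ)
    (K : Fin n → Matrix (Fin m) (Fin m) ℝ)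
    (L : Fin n → Fin n → Matrix (Fin m) (Fin m) ℝ)
    (x : Fin n → ℝ) (X : Matrix (Fin n) (Fin n) ℝ) : Matrix (Fin m) (Fin m) ℝ :=
  F0 + ∑ k, x k • K k + ∑ i, ∑ j, X i j • L i j

/-- Negative semidefinite real matrix. -/
def NegSemidef' {k : ℕ} (A : Matrix (Fin k) (Fin k) ℝ) : Prop := (-A).PosSemidef

/-- Negative definite real matrix. -/
def NegDef' {k : ℕ} (A : Matrix (Fin k) (Fin k) ℝ) : Prop := (-A).PosDef

/-- The BMI feasible set `F = {x : p(x, xxᵀ) ⪯ 0}`. -/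
def feasSet {n m : ℕ} (F0 : Matrix (Fin m) (Fin m) ℝ)
    (K : Fin n → Matrix (Fin m) (Fin m) ℝ)
    (L : Fin n → Fin n → Matrix (Fin m) (Fin m) ℝ) : Set (Fin n → ℝ) :=
  {x | NegSemidef' (pencil F0 K L x (vecMulVec x x))}

/-- Feasibility distance `d_F(x) = inf {‖x − a‖₂ : a ∈ F}`. -/
def distF {n m : ℕ} (F0 : Matrix (Fin m) (Fin m) ℝ)
    (K : Fin n → Matrix (Fin m) (Fin m) ℝ)
    (L : Fin n → Fin n → Matrix (Fin m) (Fin m) ℝ) (x : Fin n → ℝ) : ℝ :=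
  sInf {r | ∃ a ∈ feasSet F0 K L, r = vecNorm (x - a)}

/-- `δₖ(x) = 2 ∑ᵢ xᵢ L_{k i}`. -/
def deltaMat {n m : ℕ} (L : Fin n → Fin n → Matrix (Fin m) (Fin m) ℝ)
    (k : Fin n) (x : Fin n → ℝ) : Matrix (Fin m) (Fin m) ℝ :=
  (2 : ℝ) • ∑ i, x i • L k i

/-- The MFCQ condition at a point `x`. -/
def MFCQ {n m : ℕ} (F0 : Matrix (Fin m) (Fin m) ℝ)
    (K : Fin n → Matrix (Fin m) (Fin m) ℝ)
    (L : Fin n → Fin n → Matrix (Fin m) (Fin m) ℝ) (x : Fin n → ℝ) : Prop :=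
  ∃ b : Fin n → ℝ,
    NegDef' (pencil F0 K L x (vecMulVec x x) + ∑ k, b k • (K k + deltaMat L k x))

/-- Smallest eigenvalue of a symmetric real matrix, via the Rayleigh quotient. -/
def lambdaMin {k : ℕ} (A : Matrix (Fin k) (Fin k) ℝ) : ℝ :=
  sInf {r | ∃ u : Fin k → ℝ, vecNorm u = 1 ∧ r = u ⬝ᵥ (A *ᵥ u)}

/-- The G-MFCQ function `s(x)`. -/
def sFun {n m : ℕ} (K : Fin n → Matrix (Fin m) (Fin m) ℝ)
    (L : Fin n → Fin n → Matrix (Fin m) (Fin m) ℝ) (x : Fin n → ℝ) : ℝ :=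
  sSup {r | ∃ b : Fin n → ℝ, vecNorm b = 1 ∧
    r = lambdaMin (-(∑ k, b k • (K k + deltaMat L k x)))}

/-- Spectral norm of a real matrix. -/
def specNorm {k : ℕ} (A : Matrix (Fin k) (Fin k) ℝ) : ℝ :=
  sSup {r | ∃ v : Fin k → ℝ, vecNorm v = 1 ∧ r = vecNorm (A *ᵥ v)}

/-- Pencil norm `‖p‖₂`. -/
def pencilNorm {n m : ℕ} (L : Fin n → Fin n → Matrix (Fin m) (Fin m) ℝ) : ℝ :=
  sSup {r | ∃ u : Fin m → ℝ, vecNorm u = 1 ∧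
    r = specNorm (Matrix.of fun i j => u ⬝ᵥ (L i j *ᵥ u))}

/-- Cone `C₁`: positive semidefinite matrices. -/
def coneC1 (n : ℕ) : Set (Matrix (Fin n) (Fin n) ℝ) := {H | H.PosSemidef}

/-- Cone `C₂`: symmetric matrices with `Hᵢᵢ ≥ 0` and `Hᵢᵢ Hⱼⱼ ≥ Hᵢⱼ²`. -/
def coneC2 (n : ℕ) : Set (Matrix (Fin n) (Fin n) ℝ) :=
  {H | H.IsSymm ∧ ∀ i j, 0 ≤ H i i ∧ H i j ^ 2 ≤ H i i * H j j}

/-- Cone `C₃`: symmetric matrices with `Hᵢᵢ ≥ 0` and `Hᵢᵢ + Hⱼⱼ ≥ 2|Hᵢⱼ|`. -/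
def coneC3 (n : ℕ) : Set (Matrix (Fin n) (Fin n) ℝ) :=
  {H | H.IsSymm ∧ ∀ i j, 0 ≤ H i i ∧ 2 * |H i j| ≤ H i i + H j j}

/-- Dual cone with respect to the trace inner product. -/
def dualCone {n : ℕ} (C : Set (Matrix (Fin n) (Fin n) ℝ)) :
    Set (Matrix (Fin n) (Fin n) ℝ) :=
  {Y | Y.IsSymm ∧ ∀ H ∈ C, 0 ≤ (Y * H).trace}

/-- `α(Λ)` : the n×n matrix with entries `⟨Lᵢⱼ, Λ⟩ = tr(Lᵢⱼ Λ)`. -/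
def alphaMat {n m : ℕ} (L : Fin n → Fin n → Matrix (Fin m) (Fin m) ℝ)
    (Λ : Matrix (Fin m) (Fin m) ℝ) : Matrix (Fin n) (Fin n) ℝ :=
  Matrix.of fun i j => (L i j * Λ).trace

/-- Objective of the penalized problem `(P_η)`. -/
def penObj {n : ℕ} (c xc : Fin n → ℝ) (η : ℝ) (x : Fin n → ℝ) : ℝ :=
  c ⬝ᵥ x + η * vecNorm (x - xc) ^ 2

/-- `x` is an optimal solution of the penalized problem `(P_η)`. -/
def IsOptPen {n m : ℕ} (F0 : Matrix (Fin m) (Fin m) ℝ)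
    (K : Fin n → Matrix (Fin m) (Fin m) ℝ)
    (L : Fin n → Fin n → Matrix (Fin m) (Fin m) ℝ)
    (c xc : Fin n → ℝ) (η : ℝ) (x : Fin n → ℝ) : Prop :=
  x ∈ feasSet F0 K L ∧ ∀ y ∈ feasSet F0 K L, penObj c xc η x ≤ penObj c xc η y

/-- Objective of the penalized convex relaxation `(R_{η,C})`. -/
def relObj {n : ℕ} (c xc : Fin n → ℝ) (η : ℝ) (x : Fin n → ℝ)
    (X : Matrix (Fin n) (Fin n) ℝ) : ℝ :=
  c ⬝ᵥ x + η * (X.trace - 2 * (xc ⬝ᵥ x) + xc ⬝ᵥ xc)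

/-- Feasibility for the relaxation with cone `C`. -/
def RelFeasible {n m : ℕ} (F0 : Matrix (Fin m) (Fin m) ℝ)
    (K : Fin n → Matrix (Fin m) (Fin m) ℝ)
    (L : Fin n → Fin n → Matrix (Fin m) (Fin m) ℝ)
    (C : Set (Matrix (Fin n) (Fin n) ℝ))
    (x : Fin n → ℝ) (X : Matrix (Fin n) (Fin n) ℝ) : Prop :=
  X.IsSymm ∧ NegSemidef' (pencil F0 K L x X) ∧ X - vecMulVec x x ∈ C

/-- `(x, X)` is an optimal solution of the penalized convex relaxation `(R_{η,C})`. -/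
def IsOptRel {n m : ℕ} (F0 : Matrix (Fin m) (Fin m) ℝ)
    (K : Fin n → Matrix (Fin m) (Fin m) ℝ)
    (L : Fin n → Fin n → Matrix (Fin m) (Fin m) ℝ)
    (c xc : Fin n → ℝ) (η : ℝ) (C : Set (Matrix (Fin n) (Fin n) ℝ))
    (x : Fin n → ℝ) (X : Matrix (Fin n) (Fin n) ℝ) : Prop :=
  RelFeasible F0 K L C x X ∧
    ∀ y Y, RelFeasible F0 K L C y Y → relObj c xc η x X ≤ relObj c xc η y Y

/-- The KKT conditions for `(P_η)` at `(x, Λ)`. -/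
def KKT {n m : ℕ} (F0 : Matrix (Fin m) (Fin m) ℝ)
    (K : Fin n → Matrix (Fin m) (Fin m) ℝ)
    (L : Fin n → Fin n → Matrix (Fin m) (Fin m) ℝ)
    (c xc : Fin n → ℝ) (η : ℝ)
    (x : Fin n → ℝ) (Λ : Matrix (Fin m) (Fin m) ℝ) : Prop :=
  Λ.IsSymm ∧ Λ.PosSemidef ∧
  c + (2 * η) • (x - xc) + (∑ k, ((K k * Λ).trace) • (Pi.single k 1 : Fin n → ℝ))
      + (2 : ℝ) • (alphaMat L Λ *ᵥ x) = 0 ∧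
  Λ * pencil F0 K L x (vecMulVec x x) = 0


/-- The n×2 matrix `[eᵢ, eⱼ]` whose columns are standard basis vectors. -/
def basisPair {n : ℕ} (i j : Fin n) : Matrix (Fin n) (Fin 2) ℝ :=
  Matrix.of fun a b =>
    if b = 0 then (if a = i then 1 else 0) else (if a = j then 1 else 0)

/-- The assembled matrix `∑ᵢⱼ [eᵢ, eⱼ] Hᵢⱼ [eᵢ, eⱼ]ᵀ`. -/
def assemble {n : ℕ} (H : Fin n → Fin n → Matrix (Fin 2) (Fin 2) ℝ) :
    Matrix (Fin n) (Fin n) ℝ :=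
  ∑ i, ∑ j, basisPair i j * H i j * (basisPair i j)ᵀ

/-- The matrices assembled from families of positive semidefinite `2 × 2` blocks. -/
def blockCone (n : ℕ) : Set (Matrix (Fin n) (Fin n) ℝ) :=
  {Y | ∃ H : Fin n → Fin n → Matrix (Fin 2) (Fin 2) ℝ,
    (∀ i j, (H i j).PosSemidef) ∧ Y = assemble H}

/-- Pairing with one summand `[eᵢ, eⱼ] B [eᵢ, eⱼ]ᵀ` only sees the principal `{i, j}` block. -/
lemma pairing_block {n : ℕ} (G : Matrix (Fin n) (Fin n) ℝ) (i j : Fin n)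
    (B : Matrix (Fin 2) (Fin 2) ℝ) :
    ∑ a, ∑ b, G a b * (basisPair i j * B * (basisPair i j)ᵀ) a b =
      G i i * B 0 0 + G i j * B 0 1 + G j i * B 1 0 + G j j * B 1 1 := by
  have h : ∀ a b, G a b * (basisPair i j * B * (basisPair i j)ᵀ) a b =
      (if a = i then (if b = i then G a b * B 0 0 else 0) else 0)
      + (if a = i then (if b = j then G a b * B 0 1 else 0) else 0)
      + (if a = j then (if b = i then G a b * B 1 0 else 0) else 0)
      + (if a = j then (if b = j then G a b * B 1 1 else 0) else 0) := by
    intro a b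
    simp only [Matrix.mul_apply, Fin.sum_univ_two, Matrix.transpose_apply, basisPair,
      Matrix.of_apply, if_true, one_ne_zero, if_false]
    split_ifs <;> ring
  simp only [h, Finset.sum_add_distrib, Finset.sum_ite_irrel, Finset.sum_const_zero,
    Finset.sum_ite_eq', Finset.mem_univ, if_true]

lemma pairing_assemble {n : ℕ} (G : Matrix (Fin n) (Fin n) ℝ)
    (H : Fin n → Fin n → Matrix (Fin 2) (Fin 2) ℝ) :
    ∑ a, ∑ b, G a b * assemble H a b = ∑ i, ∑ j,
      (G i i * H i j 0 0 + G i j * H i j 0 1 + G j i * H i j 1 0 + G j j * H i j 1 1) := by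
  simp only [assemble, Matrix.sum_apply, Finset.mul_sum, ← pairing_block]
  calc ∑ a, ∑ b, ∑ i, ∑ j, G a b * (basisPair i j * H i j * (basisPair i j)ᵀ) a b
      = ∑ a, ∑ i, ∑ b, ∑ j, G a b * (basisPair i j * H i j * (basisPair i j)ᵀ) a b :=
        Finset.sum_congr rfl fun a _ => Finset.sum_comm
    _ = ∑ i, ∑ a, ∑ b, ∑ j, G a b * (basisPair i j * H i j * (basisPair i j)ᵀ) a b :=
        Finset.sum_comm
    _ = ∑ i, ∑ a, ∑ j, ∑ b, G a b * (basisPair i j * H i j * (basisPair i j)ᵀ) a b :=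
        Finset.sum_congr rfl fun i _ => Finset.sum_congr rfl fun a _ => Finset.sum_comm
    _ = _ := Finset.sum_congr rfl fun i _ => Finset.sum_comm

lemma trace_mul_eq_pairing {n : ℕ} (Y G : Matrix (Fin n) (Fin n) ℝ) (hG : G.IsSymm) :
    (Y * G).trace = ∑ a, ∑ b, G a b * Y a b := by
  simp only [Matrix.trace, Matrix.diag, Matrix.mul_apply]
  refine Finset.sum_congr rfl fun a _ => Finset.sum_congr rfl fun b _ => ?_
  rw [hG.apply a b, mul_comm]

lemma posSemidef_two {B : Matrix (Fin 2) (Fin 2) ℝ} (hB : B.PosSemidef) :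
    0 ≤ B 0 0 ∧ 0 ≤ B 1 1 ∧ B 1 0 = B 0 1 ∧ B 0 1 ^ 2 ≤ B 0 0 * B 1 1 := by
  have hs : B 1 0 = B 0 1 := by simpa using hB.isHermitian.apply 0 1
  refine ⟨hB.diag_nonneg, hB.diag_nonneg, hs, ?_⟩
  have := hB.det_nonneg
  rw [Matrix.det_fin_two, hs] at this
  nlinarith

/-- Two positive semidefinite symmetric `2 × 2` matrices have nonnegative trace pairing. -/
lemma two_block_pairing_nonneg {p q r a b c : ℝ} (hp : 0 ≤ p) (hr : 0 ≤ r)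
    (hq : q ^ 2 ≤ p * r) (ha : 0 ≤ a) (hc : 0 ≤ c) (hb : b ^ 2 ≤ a * c) :
    0 ≤ p * a + 2 * (q * b) + r * c := by
  have h1 : (q * b) ^ 2 ≤ (p * a) * (r * c) := by
    calc (q * b) ^ 2 = q ^ 2 * b ^ 2 := by ring
      _ ≤ (p * r) * (a * c) := by gcongr
      _ = _ := by ring
  have h2 : (2 * (q * b)) ^ 2 ≤ (p * a + r * c) ^ 2 := by
    nlinarith [sq_nonneg (p * a - r * c)]
  have h3 := abs_le_of_sq_le_sq h2 (by positivity)
  linarith [(abs_le.1 h3).1]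

lemma continuous_assemble {n : ℕ} :
    Continuous (assemble : (Fin n → Fin n → Matrix (Fin 2) (Fin 2) ℝ) → _) := by
  unfold assemble
  fun_prop

lemma isClosed_posSemidef_two : IsClosed {B : Matrix (Fin 2) (Fin 2) ℝ | B.PosSemidef} := by
  simp only [Matrix.posSemidef_iff_dotProduct_mulVec, Matrix.IsHermitian, Set.ofPred_and,
    Set.ofPred_forall]
  refine (isClosed_eq (by fun_prop) (by fun_prop)).inter (isClosed_iInter fun x => ?_)
  exact isClosed_le (by fun_prop) (by fun_prop)

/-- Positive semidefinite block families with entries in `[-R, R]` form a compact set. -/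
lemma isCompact_blocks (n : ℕ) (R : ℝ) :
    IsCompact {H : Fin n → Fin n → Matrix (Fin 2) (Fin 2) ℝ |
      (∀ i j, (H i j).PosSemidef) ∧ ∀ i j k l, H i j k l ∈ Set.Icc (-R) R} := by
  have hbox : IsCompact {B : Matrix (Fin 2) (Fin 2) ℝ | ∀ k l, B k l ∈ Set.Icc (-R) R} := by
    have := isCompact_univ_pi (X := fun _ : Fin 2 => Fin 2 → ℝ)
      (s := fun _ => Set.univ.pi fun _ => Set.Icc (-R) R)
      fun _ => isCompact_univ_pi fun _ => isCompact_Icc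
    refine (congrArg IsCompact ?_).mpr this
    exact Set.ext fun B => ⟨fun h k _ l _ => h k l, fun h k l => h k trivial l trivial⟩
  have := isCompact_univ_pi (X := fun _ : Fin n => Fin n → Matrix (Fin 2) (Fin 2) ℝ)
    (s := fun _ => Set.univ.pi fun _ => {B | ∀ k l, B k l ∈ Set.Icc (-R) R} ∩ {B | B.PosSemidef})
    fun _ => isCompact_univ_pi fun _ => hbox.inter_right isClosed_posSemidef_two
  convert this using 1
  ext H
  simp only [Set.mem_ofPred_eq, Set.mem_pi, Set.mem_univ, true_implies, Set.mem_inter_iff]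
  exact ⟨fun h i j => ⟨h.2 i j, h.1 i j⟩, fun h => ⟨fun i j => (h i j).2, fun i j => (h i j).1⟩⟩

/-- A diagonal block `Hᵢᵢ` contributes only the scalar `(1, 1) Hᵢᵢ (1, 1)ᵀ` at position
`(i, i)`, so its off-diagonal entries can be taken to vanish. Without this normalisation the
diagonal blocks are not bounded in terms of the assembled matrix. -/
lemma exists_normalized {n : ℕ} {H : Fin n → Fin n → Matrix (Fin 2) (Fin 2) ℝ}
    (hH : ∀ i j, (H i j).PosSemidef) :
    ∃ K : Fin n → Fin n → Matrix (Fin 2) (Fin 2) ℝ, (∀ i j, (K i j).PosSemidef) ∧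
      (∀ i, K i i 0 1 = 0) ∧ assemble H = assemble K := by
  refine ⟨fun i j => if i = j then
    Matrix.diagonal ![H i j 0 0 + 2 * H i j 0 1 + H i j 1 1, 0] else H i j, ?_, ?_, ?_⟩
  · intro i j
    dsimp only
    split_ifs
    · refine Matrix.PosSemidef.diagonal fun k => ?_
      obtain ⟨h0, h1, hs, hd⟩ := posSemidef_two (hH i j)
      have := two_block_pairing_nonneg (p := 1) (q := 1) (r := 1) (by simp) (by simp) (by simp)
        h0 h1 hd
      fin_cases k
      · simp
        linarith
      · simp
    · exact hH i j
  · intro i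
    simp
  · refine Finset.sum_congr rfl fun i _ => Finset.sum_congr rfl fun j _ => ?_
    dsimp only
    split_ifs with hij
    · subst hij
      have hs := (posSemidef_two (hH i i)).2.2.1
      ext a b
      simp only [Matrix.mul_apply, Fin.sum_univ_two, Matrix.transpose_apply, basisPair,
        Matrix.of_apply, if_true, one_ne_zero, if_false, hs]
      split_ifs <;> simp <;> ring
    · rfl

/-- For a normalised family, the trace of the assembled matrix is the sum of the traces of the
blocks, so it bounds every entry of every block. -/
lemma block_entry_bound {n : ℕ} {H : Fin n → Fin n → Matrix (Fin 2) (Fin 2) ℝ}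
    (hH : ∀ i j, (H i j).PosSemidef) (hd : ∀ i, H i i 0 1 = 0) {R : ℝ}
    (hR : (assemble H).trace ≤ R) :
    ∀ i j k l, H i j k l ∈ Set.Icc (-R) R := by
  have htr : (assemble H).trace = ∑ i, ∑ j, (H i j 0 0 + H i j 1 1) := by
    rw [← mul_one (assemble H), trace_mul_eq_pairing _ _ Matrix.isSymm_one, pairing_assemble]
    refine Finset.sum_congr rfl fun i _ => Finset.sum_congr rfl fun j _ => ?_
    rw [(posSemidef_two (hH i j)).2.2.1]
    by_cases hij : i = j
    · subst hij
      simp [hd]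
    · simp [hij, Ne.symm hij]
  have hnn : ∀ i j, 0 ≤ H i j 0 0 + H i j 1 1 := fun i j =>
    add_nonneg (hH i j).diag_nonneg (hH i j).diag_nonneg
  intro i j k l
  have hle : H i j 0 0 + H i j 1 1 ≤ R := by
    rw [htr] at hR
    refine le_trans (le_trans (b := ∑ j, (H i j 0 0 + H i j 1 1)) ?_ ?_) hR
    · exact Finset.single_le_sum (f := fun j => H i j 0 0 + H i j 1 1)
        (fun j _ => hnn i j) (Finset.mem_univ j)
    · exact Finset.single_le_sum (f := fun i => ∑ j, (H i j 0 0 + H i j 1 1))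
        (fun i _ => Finset.sum_nonneg fun j _ => hnn i j) (Finset.mem_univ i)
  obtain ⟨h0, h1, hs, hq⟩ := posSemidef_two (hH i j)
  have hoff : |H i j 0 1| ≤ R := by
    refine abs_le_of_sq_le_sq ?_ (by linarith)
    nlinarith
  have hoff' := abs_le.1 hoff
  fin_cases k <;> fin_cases l <;> simp [hs] <;> constructor <;> linarith

lemma isClosed_blockCone (n : ℕ) : IsClosed (blockCone n) := by
  have : SequentialSpace (Matrix (Fin n) (Fin n) ℝ) :=
    inferInstanceAs (SequentialSpace (Fin n → Fin n → ℝ))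
  refine isSeqClosed_iff_isClosed.1 fun u Y hu hlim => ?_
  have htr : Filter.Tendsto (fun k => Matrix.trace (u k)) Filter.atTop
      (nhds (Matrix.trace Y)) := by
    have hc : Continuous fun Z : Matrix (Fin n) (Fin n) ℝ => Matrix.trace Z := by
      unfold Matrix.trace Matrix.diag
      fun_prop
    exact (hc.tendsto Y).comp hlim
  obtain ⟨R, hR⟩ := htr.bddAbove_range
  have hK := ((isCompact_blocks n R).image continuous_assemble).isClosed
  have hmem : ∀ k, u k ∈ (assemble '' {H : Fin n → Fin n → Matrix (Fin 2) (Fin 2) ℝ |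
      (∀ i j, (H i j).PosSemidef) ∧ ∀ i j k l, H i j k l ∈ Set.Icc (-R) R}) := by
    intro k
    obtain ⟨H₀, hH₀, hHu₀⟩ := hu k
    obtain ⟨H, hH, hd, hHH⟩ := exists_normalized hH₀
    have hHu := hHu₀.trans hHH
    refine ⟨H, ⟨hH, block_entry_bound hH hd ?_⟩, hHu.symm⟩
    rw [← hHu]
    exact hR ⟨k, rfl⟩
  obtain ⟨H, hH, hHY⟩ := hK.mem_of_tendsto hlim (Filter.Eventually.of_forall hmem)
  exact ⟨H, hH.1, hHY.symm⟩

lemma assemble_add {n : ℕ} (H K : Fin n → Fin n → Matrix (Fin 2) (Fin 2) ℝ) :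
    assemble (H + K) = assemble H + assemble K := by
  simp [assemble, Matrix.mul_add, Matrix.add_mul, Finset.sum_add_distrib]

lemma assemble_smul {n : ℕ} (c : ℝ) (H : Fin n → Fin n → Matrix (Fin 2) (Fin 2) ℝ) :
    assemble (c • H) = c • assemble H := by
  simp [assemble, Finset.smul_sum]

lemma smul_mem_blockCone {n : ℕ} {Y : Matrix (Fin n) (Fin n) ℝ} (hY : Y ∈ blockCone n) {c : ℝ}
    (hc : 0 ≤ c) : c • Y ∈ blockCone n := by
  obtain ⟨H, hH, rfl⟩ := hY
  exact ⟨c • H, fun i j => (hH i j).smul hc, (assemble_smul c H).symm⟩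

lemma convex_blockCone (n : ℕ) : Convex ℝ (blockCone n) := by
  intro Y hY Z hZ a b ha hb _
  obtain ⟨H, hH, hHY⟩ := smul_mem_blockCone hY ha
  obtain ⟨K, hK, hKZ⟩ := smul_mem_blockCone hZ hb
  rw [hHY, hKZ]
  exact ⟨H + K, fun i j => (hH i j).add (hK i j), (assemble_add H K).symm⟩

/-- A symmetric matrix that pairs nonnegatively with all of `blockCone` lies in `C₂`: testing
against a single rank-one block shows that its principal `2 × 2` forms are nonnegative. -/
lemma mem_coneC2_of_pairing {n : ℕ} {G : Matrix (Fin n) (Fin n) ℝ} (hG : G.IsSymm)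
    (h : ∀ Z ∈ blockCone n, 0 ≤ ∑ a, ∑ b, G a b * Z a b) : G ∈ coneC2 n := by
  have hq : ∀ i j : Fin n, ∀ x y : ℝ, 0 ≤ G i i * x ^ 2 + 2 * G i j * (x * y) + G j j * y ^ 2 := by
    intro i j x y
    have hB : (vecMulVec ![x, y] ![x, y]).PosSemidef := by
      simpa using Matrix.posSemidef_vecMulVec_self_star ![x, y]
    have := h (assemble fun k l => if k = i ∧ l = j then vecMulVec ![x, y] ![x, y] else 0)
      ⟨_, fun k l => by split_ifs; exacts [hB, Matrix.PosSemidef.zero], rfl⟩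
    rw [pairing_assemble, Finset.sum_eq_single i, Finset.sum_eq_single j] at this
    · simp only [and_self, if_true, Matrix.vecMulVec_apply] at this
      simp only [Matrix.cons_val_zero, Matrix.cons_val_one] at this
      rw [hG.apply i j] at this
      linarith
    · intro l _ hl
      simp [hl]
    · simp
    · intro k _ hk
      simp [hk]
    · simp
  have hd : ∀ i, 0 ≤ G i i := fun i => by simpa using hq i i 1 0
  refine ⟨hG, fun i j => ⟨hd i, ?_⟩⟩
  have := discrim_le_zero (a := G i i) (b := 2 * G i j) (c := G j j) fun x => by
    have := hq i j x 1
    linarith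
  unfold discrim at this
  linarith

lemma mem_blockCone_of_mem_dual {n : ℕ} {Y : Matrix (Fin n) (Fin n) ℝ}
    (hY : Y ∈ dualCone (coneC2 n)) : Y ∈ blockCone n := by
  by_contra hn
  have : LocallyConvexSpace ℝ (Matrix (Fin n) (Fin n) ℝ) :=
    inferInstanceAs (LocallyConvexSpace ℝ (Fin n → Fin n → ℝ))
  obtain ⟨f, u, hfu, huY⟩ :=
    geometric_hahn_banach_closed_point (convex_blockCone n) (isClosed_blockCone n) hn
  have h0 : (0 : Matrix (Fin n) (Fin n) ℝ) ∈ blockCone n :=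
    ⟨0, fun _ _ => Matrix.PosSemidef.zero, by simp [assemble]⟩
  have hu : 0 < u := by simpa using hfu 0 h0
  -- A functional bounded above on a cone is nonpositive there.
  have hneg : ∀ Z ∈ blockCone n, f Z ≤ 0 := by
    intro Z hZ
    by_contra! hpos
    have := hfu _ (smul_mem_blockCone hZ (div_pos hu hpos).le)
    rw [map_smul, smul_eq_mul, div_mul_cancel₀ _ hpos.ne'] at this
    exact lt_irrefl _ this
  let E : Matrix (Fin n) (Fin n) ℝ := Matrix.of fun a b => f (Matrix.single a b 1)
  have hf : ∀ Z, f Z = ∑ a, ∑ b, E a b * Z a b := by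
    intro Z
    conv_lhs => rw [Matrix.matrix_eq_sum_single Z]
    simp only [map_sum, E, Matrix.of_apply]
    refine Finset.sum_congr rfl fun a _ => Finset.sum_congr rfl fun b _ => ?_
    rw [mul_comm, ← smul_eq_mul, ← map_smul, Matrix.smul_single, smul_eq_mul, mul_one]
  -- `G` represents `-f` on symmetric matrices.
  let G : Matrix (Fin n) (Fin n) ℝ := Matrix.of fun a b => -(E a b + E b a) / 2
  have hGs : G.IsSymm := by
    ext a b
    simp [G, add_comm]
  have hGf : ∀ Z : Matrix (Fin n) (Fin n) ℝ, Z.IsSymm →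
      ∑ a, ∑ b, G a b * Z a b = - f Z := by
    intro Z hZ
    have hsw : ∑ a, ∑ b, E b a * Z a b = f Z := by
      rw [Finset.sum_comm, hf]
      exact Finset.sum_congr rfl fun a _ => Finset.sum_congr rfl fun b _ => by rw [hZ.apply]
    have : ∀ a b, G a b * Z a b = -(1 / 2) * (E a b * Z a b) + -(1 / 2) * (E b a * Z a b) := by
      intro a b
      simp only [G, Matrix.of_apply]
      ring
    simp only [this, Finset.sum_add_distrib, ← Finset.mul_sum]
    rw [hsw, ← hf Z]
    ring
  have hGC : G ∈ coneC2 n := by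
    refine mem_coneC2_of_pairing hGs fun Z hZ => ?_
    rw [hGf Z ?_]
    · linarith [hneg Z hZ]
    · obtain ⟨H, hH, rfl⟩ := hZ
      have hT : ∀ i j, (H i j)ᵀ = H i j := fun i j => by
        simpa [Matrix.conjTranspose_eq_transpose_of_trivial] using (hH i j).isHermitian.eq
      simp [Matrix.IsSymm, assemble, Matrix.transpose_sum, Matrix.transpose_mul, hT,
        Matrix.mul_assoc]
  have := hY.2 G hGC
  rw [trace_mul_eq_pairing _ _ hGs, hGf Y hY.1] at this
  linarith

theorem bmi_dual_cone_socp {n : ℕ} (hn : 0 < n)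
    (Y : Matrix (Fin n) (Fin n) ℝ) (hY : Y.IsSymm) :
    Y ∈ dualCone (coneC2 n) ↔
      ∃ H : Fin n → Fin n → Matrix (Fin 2) (Fin 2) ℝ,
        (∀ i j, (H i j).PosSemidef) ∧
        Y = ∑ i, ∑ j, basisPair i j * H i j * (basisPair i j)ᵀ := by
  constructor
  · exact mem_blockCone_of_mem_dual
  · rintro ⟨H, hH, hYH⟩
    refine ⟨hY, fun G hG => ?_⟩
    have hYH' : Y = assemble H := hYH
    rw [trace_mul_eq_pairing _ _ hG.1, hYH', pairing_assemble]
    refine Finset.sum_nonneg fun i _ => Finset.sum_nonneg fun j _ => ?_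
    obtain ⟨h0, h1, hs, hd⟩ := posSemidef_two (hH i j)
    have := two_block_pairing_nonneg (hG.2 i j).1 (hG.2 j j).1 (hG.2 i j).2 h0 h1 hd
    rw [hs, hG.1.apply i j]
    linarith
end
end

section
/- Characterization of the dual cone of the parabolic relaxation cone: an n×n real symmetric matrix Y belongs to the dual cone C₃* (with respect to the trace inner product) if and only if Y is diagonally dominant with nonnegative diagonal, i.e., Yᵢᵢ ≥ Σ_{j≠i} |Yᵢⱼ| for every i ∈ {1,…,n}. -/
/-!
Both directions rest on `tr (Y H) = ∑ᵢ ∑ⱼ Yᵢⱼ Hᵢⱼ` for symmetric `H`.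

If `Y` is diagonally dominant and `H ∈ C₃`, bounding the off-diagonal terms by
`Yᵢⱼ Hᵢⱼ ≥ -|Yᵢⱼ| (Hᵢᵢ + Hⱼⱼ) / 2` and symmetrizing gives
`tr (Y H) ≥ ∑ᵢ Hᵢᵢ (Yᵢᵢ - ∑_{j ≠ i} |Yᵢⱼ|) ≥ 0`.

Conversely, row `i` of the dominance condition is obtained by pairing `Y` with the matrix of `C₃`
whose only nonzero entries are `Hᵢᵢ = 1` and `Hᵢⱼ = Hⱼᵢ = -sign(Yᵢⱼ) / 2` for `j ≠ i`: the pairing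
equals `Yᵢᵢ - ∑_{j ≠ i} |Yᵢⱼ|`.
-/

open Matrix

noncomputable section

/-- The test vector for row `i`: entry `1/2` at `i` and `-sign(Yᵢⱼ)/2` elsewhere. -/
def testVec {n : ℕ} (Y : Matrix (Fin n) (Fin n) ℝ) (i : Fin n) (j : Fin n) : ℝ :=
  if j = i then 1 / 2 else -(SignType.sign (Y i j) : ℝ) / 2

/-- The test matrix `a eᵢᵀ + eᵢ aᵀ` for row `i`, where `a = testVec Y i`. -/
def testMat {n : ℕ} (Y : Matrix (Fin n) (Fin n) ℝ) (i : Fin n) : Matrix (Fin n) (Fin n) ℝ :=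
  Matrix.of fun j k =>
    testVec Y i j * (if k = i then 1 else 0) + (if j = i then 1 else 0) * testVec Y i k

lemma abs_sign_le_one (x : ℝ) : |(SignType.sign x : ℝ)| ≤ 1 := by
  rcases lt_trichotomy x 0 with h | h | h <;> simp [h]

lemma testMat_mem {n : ℕ} (Y : Matrix (Fin n) (Fin n) ℝ) (i : Fin n) :
    testMat Y i ∈ coneC3 n := by
  refine ⟨?_, fun j k => ?_⟩
  · ext j k
    simp only [testMat, Matrix.transpose_apply, Matrix.of_apply]
    ring
  · have hj := abs_sign_le_one (Y i j)
    have hk := abs_sign_le_one (Y i k)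
    by_cases h1 : j = i <;> by_cases h2 : k = i <;>
      simp [testMat, testVec, h1, h2, abs_div] <;> linarith

lemma trace_mul_eq_sum {n : ℕ} (Y H : Matrix (Fin n) (Fin n) ℝ) (hH : H.IsSymm) :
    (Y * H).trace = ∑ i, ∑ j, Y i j * H i j := by
  simp only [Matrix.trace, Matrix.diag_apply, Matrix.mul_apply]
  exact Finset.sum_congr rfl fun i _ => Finset.sum_congr rfl fun j _ => by rw [hH.apply i j]

lemma trace_mul_testMat {n : ℕ} (Y : Matrix (Fin n) (Fin n) ℝ) (hY : Y.IsSymm) (i : Fin n) :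
    (Y * testMat Y i).trace = Y i i - ∑ j ∈ Finset.univ.erase i, |Y i j| := by
  have h1 : (Y * testMat Y i).trace = 2 * ∑ j, Y i j * testVec Y i j := by
    rw [trace_mul_eq_sum _ _ (testMat_mem Y i).1]
    simp only [testMat, Matrix.of_apply, mul_add, Finset.sum_add_distrib]
    rw [two_mul]
    congr 1
    · refine Finset.sum_congr rfl fun j _ => ?_
      simp [hY.apply i j]
    · rw [Finset.sum_eq_single i] <;> simp +contextual
  rw [h1, ← Finset.add_sum_erase _ _ (Finset.mem_univ i), mul_add, Finset.mul_sum,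
    sub_eq_add_neg, ← Finset.sum_neg_distrib]
  congr 1
  · simp only [testVec, if_true]
    ring
  · refine Finset.sum_congr rfl fun j hj => ?_
    rw [testVec, if_neg (Finset.ne_of_mem_erase hj), ← self_mul_sign (Y i j)]
    ring

theorem bmi_dual_cone_parabolic {n : ℕ} (hn : 0 < n)
    (Y : Matrix (Fin n) (Fin n) ℝ) (hY : Y.IsSymm) :
    Y ∈ dualCone (coneC3 n) ↔
      ∀ i, ∑ j ∈ Finset.univ.erase i, |Y i j| ≤ Y i i := by
  constructor
  · rintro ⟨-, h⟩ i
    have := h _ (testMat_mem Y i)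
    rw [trace_mul_testMat Y hY i] at this
    linarith
  · refine fun h => ⟨hY, fun H hH => ?_⟩
    rw [trace_mul_eq_sum Y H hH.1]
    -- `|Yᵢⱼ|` is symmetric, so the weights `Hᵢᵢ` and `Hⱼⱼ` contribute equally.
    have hswap : ∑ i, ∑ j ∈ Finset.univ.erase i, |Y i j| * H j j
        = ∑ i, ∑ j ∈ Finset.univ.erase i, |Y i j| * H i i := by
      rw [Finset.sum_comm' (t' := Finset.univ) (s' := fun j => Finset.univ.erase j)
        (by simp [ne_comm])]
      exact Finset.sum_congr rfl fun i _ => Finset.sum_congr rfl fun j _ => by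
        rw [hY.apply i j]
    have hrow : ∀ i, Y i i * H i i - (∑ j ∈ Finset.univ.erase i, |Y i j| * H i i) / 2
        - (∑ j ∈ Finset.univ.erase i, |Y i j| * H j j) / 2 ≤ ∑ j, Y i j * H i j := by
      intro i
      rw [← Finset.add_sum_erase _ _ (Finset.mem_univ i), sub_sub, ← add_div,
        ← Finset.sum_add_distrib, Finset.sum_div, sub_eq_add_neg, ← Finset.sum_neg_distrib]
      gcongr with j hj
      have h1 := neg_abs_le (Y i j * H i j)
      rw [abs_mul] at h1
      have h2 := mul_le_mul_of_nonneg_left (hH.2 i j).2 (abs_nonneg (Y i j))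
      linarith
    have hsum := Finset.sum_le_sum fun i (_ : i ∈ Finset.univ) => hrow i
    rw [Finset.sum_sub_distrib, Finset.sum_sub_distrib, ← Finset.sum_div, ← Finset.sum_div,
      hswap] at hsum
    have hdom : ∑ i, ∑ j ∈ Finset.univ.erase i, |Y i j| * H i i ≤ ∑ i, Y i i * H i i := by
      refine Finset.sum_le_sum fun i _ => ?_
      rw [← Finset.sum_mul]
      exact mul_le_mul_of_nonneg_right (h i) (hH.2 i i).1
    linarith
end
end

section
/- Trace bound from the KKT conditions: let η > 0, let x* ∈ F, and let Λ be an m×m real symmetric positive semidefinite matrix such that (x*, Λ) satisfies the KKT conditions for (P_η). Then tr(Λ) · s(x*) ≤ ‖c‖₂ + 2η ‖x* − x̌‖₂. -/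
/-!
For a unit vector `b` put `A_b = -∑ₖ bₖ (Kₖ + δₖ(x))`. Factoring `Λ = BᵀB` and applying the
Rayleigh bound to the rows of `B` gives `tr Λ · λ_min(A_b) ≤ tr(A_b Λ)`
(`trace_mul_lambdaMin_le`). Pairing the stationarity equation with `b` shows
`tr(A_b Λ) = b ⬝ c + 2η b ⬝ (x - x̌)` (`trace_eq_of_stationary`), which Cauchy–Schwarz bounds by
`‖c‖ + 2η ‖x - x̌‖`. Taking the supremum over `b` finishes, as `tr Λ ≥ 0`.
-/

open Matrix

noncomputable section

/-- Quadratic forms are bounded below on the unit sphere, so that the infimum defining `lambdaMin`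
is a genuine one. -/
lemma lambdaMin_bddBelow {k : ℕ} (A : Matrix (Fin k) (Fin k) ℝ) :
    BddBelow {r | ∃ u : Fin k → ℝ, vecNorm u = 1 ∧ r = u ⬝ᵥ (A *ᵥ u)} := by
  refine ⟨-∑ i, ∑ j, |A i j|, ?_⟩
  rintro r ⟨u, hu, rfl⟩
  have hs : ∑ i, u i ^ 2 = 1 := by
    unfold vecNorm at hu
    exact Real.sqrt_eq_one.mp hu
  have hi : ∀ i, |u i| ≤ 1 := fun i => by
    have h : u i ^ 2 ≤ ∑ i, u i ^ 2 :=
      Finset.single_le_sum (f := fun i => u i ^ 2) (fun j _ => sq_nonneg _) (Finset.mem_univ i)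
    rw [hs] at h
    exact (sq_le_one_iff_abs_le_one _).mp h
  simp only [dotProduct, mulVec, Finset.mul_sum, ← Finset.sum_neg_distrib]
  refine Finset.sum_le_sum fun i _ => Finset.sum_le_sum fun j _ => ?_
  have h : |u i * (A i j * u j)| ≤ |A i j| := by
    rw [abs_mul, abs_mul]
    calc |u i| * (|A i j| * |u j|) ≤ 1 * (|A i j| * 1) := by
          gcongr
          · exact hi i
          · exact hi j
      _ = |A i j| := by ring
  exact neg_le_of_abs_le h

lemma lambdaMin_mul_le {k : ℕ} (A : Matrix (Fin k) (Fin k) ℝ) (u : Fin k → ℝ) :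
    lambdaMin A * (u ⬝ᵥ u) ≤ u ⬝ᵥ (A *ᵥ u) := by
  by_cases hu : u = 0
  · simp [hu]
  have hpos : 0 < u ⬝ᵥ u := by
    have h0 : 0 ≤ u ⬝ᵥ u := Finset.sum_nonneg fun i _ => mul_self_nonneg (u i)
    exact lt_of_le_of_ne h0 fun h => hu (dotProduct_self_eq_zero.mp h.symm)
  set t := Real.sqrt (u ⬝ᵥ u) with ht
  have htpos : 0 < t := Real.sqrt_pos.mpr hpos
  have htt : t * t = u ⬝ᵥ u := Real.mul_self_sqrt hpos.le
  have hmem : t⁻¹ * (t⁻¹ * (u ⬝ᵥ (A *ᵥ u))) ∈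
      {r | ∃ u : Fin k → ℝ, vecNorm u = 1 ∧ r = u ⬝ᵥ (A *ᵥ u)} := by
    refine ⟨t⁻¹ • u, ?_, ?_⟩
    · have : ∑ i, (t⁻¹ • u) i ^ 2 = t⁻¹ ^ 2 * (u ⬝ᵥ u) := by
        simp only [dotProduct, Finset.mul_sum, Pi.smul_apply, smul_eq_mul]
        exact Finset.sum_congr rfl fun i _ => by ring
      rw [vecNorm, this, ← htt, Real.sqrt_eq_one]
      field_simp
    · simp [mulVec_smul]
  have h := csInf_le (lambdaMin_bddBelow A) hmem
  change lambdaMin A ≤ _ at h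
  calc lambdaMin A * (u ⬝ᵥ u) ≤ t⁻¹ * (t⁻¹ * (u ⬝ᵥ (A *ᵥ u))) * (u ⬝ᵥ u) := by gcongr
    _ = u ⬝ᵥ (A *ᵥ u) := by rw [← htt]; field_simp

lemma trace_mul_lambdaMin_le {k : ℕ} (A Λ : Matrix (Fin k) (Fin k) ℝ) (hΛ : Λ.PosSemidef) :
    Λ.trace * lambdaMin A ≤ (A * Λ).trace := by
  obtain ⟨B, rfl⟩ : ∃ B : Matrix (Fin k) (Fin k) ℝ, Λ = Bᵀ * B := by
    open scoped MatrixOrder in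
    obtain ⟨B, hB⟩ := CStarAlgebra.nonneg_iff_eq_star_mul_self.mp hΛ.nonneg
    exact ⟨B, by simpa [star_eq_conjTranspose] using hB⟩
  have h1 : (Bᵀ * B).trace = ∑ i, B i ⬝ᵥ B i := by
    rw [trace_mul_comm]
    rfl
  have h2 : (A * (Bᵀ * B)).trace = ∑ i, B i ⬝ᵥ (A *ᵥ B i) := by
    rw [← Matrix.mul_assoc, trace_mul_comm]
    rfl
  rw [h1, h2, Finset.sum_mul]
  exact Finset.sum_le_sum fun i _ => by
    rw [mul_comm]
    exact lambdaMin_mul_le A (B i)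

lemma vecNorm_nonneg {k : ℕ} (u : Fin k → ℝ) : 0 ≤ vecNorm u := Real.sqrt_nonneg _

lemma dotProduct_le_vecNorm {k : ℕ} (b u : Fin k → ℝ) (hb : vecNorm b = 1) :
    b ⬝ᵥ u ≤ vecNorm u := by
  have h := Real.sum_mul_le_sqrt_mul_sqrt Finset.univ b u
  change b ⬝ᵥ u ≤ vecNorm b * vecNorm u at h
  rwa [hb, one_mul] at h

lemma trace_eq_of_stationary {n m : ℕ} (K : Fin n → Matrix (Fin m) (Fin m) ℝ)
    (L : Fin n → Fin n → Matrix (Fin m) (Fin m) ℝ) (c xc x b : Fin n → ℝ) (η : ℝ)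
    (Λ : Matrix (Fin m) (Fin m) ℝ)
    (h : c + (2 * η) • (x - xc) + (∑ k, ((K k * Λ).trace) • (Pi.single k 1 : Fin n → ℝ))
      + (2 : ℝ) • (alphaMat L Λ *ᵥ x) = 0) :
    (-(∑ k, b k • (K k + deltaMat L k x)) * Λ).trace =
      b ⬝ᵥ c + 2 * η * (b ⬝ᵥ (x - xc)) := by
  have hk : ∀ k, ((K k + deltaMat L k x) * Λ).trace = -(c k + 2 * η * (x k - xc k)) := by
    intro k
    have hc := congrFun h k
    have hd : (deltaMat L k x * Λ).trace = 2 * (alphaMat L Λ *ᵥ x) k := by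
      simp [deltaMat, alphaMat, mulVec, dotProduct, Finset.sum_mul, trace_sum, mul_comm]
    simp only [Pi.add_apply, Pi.smul_apply, Pi.sub_apply, Finset.sum_apply, smul_eq_mul,
      Pi.single_apply, mul_ite, mul_one, mul_zero, Finset.sum_ite_eq, Finset.mem_univ, if_true,
      Pi.zero_apply] at hc
    rw [Matrix.add_mul, trace_add, hd]
    linarith
  rw [Matrix.neg_mul, trace_neg, Finset.sum_mul, trace_sum]
  simp only [Matrix.smul_mul, trace_smul, hk, smul_eq_mul, dotProduct, Finset.mul_sum,
    ← Finset.sum_add_distrib, ← Finset.sum_neg_distrib, Pi.sub_apply]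
  exact Finset.sum_congr rfl fun k _ => by ring

theorem bmi_trace_bound_kkt {n m : ℕ} (hn : 0 < n) (hm : 0 < m)
    (F0 : Matrix (Fin m) (Fin m) ℝ)
    (K : Fin n → Matrix (Fin m) (Fin m) ℝ)
    (L : Fin n → Fin n → Matrix (Fin m) (Fin m) ℝ)
    (hF0 : F0.IsSymm) (hK : ∀ k, (K k).IsSymm)
    (hL : ∀ i j, (L i j).IsSymm) (hLsy : ∀ i j, L i j = L j i)
    (c xc : Fin n → ℝ)
    (η : ℝ) (hη : 0 < η)
    (xs : Fin n → ℝ) (hxs : xs ∈ feasSet F0 K L)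
    (Λ : Matrix (Fin m) (Fin m) ℝ)
    (hKKT : KKT F0 K L c xc η xs Λ) :
    Λ.trace * sFun K L xs ≤ vecNorm c + 2 * η * vecNorm (xs - xc) := by
  obtain ⟨-, hpsd, hstat, -⟩ := hKKT
  have hR : 0 ≤ vecNorm c + 2 * η * vecNorm (xs - xc) := by
    have h1 := vecNorm_nonneg c
    have h2 := vecNorm_nonneg (xs - xc)
    positivity
  have hb : ∀ b : Fin n → ℝ, vecNorm b = 1 →
      Λ.trace * lambdaMin (-(∑ k, b k • (K k + deltaMat L k xs))) ≤
        vecNorm c + 2 * η * vecNorm (xs - xc) := by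
    intro b hb
    refine (trace_mul_lambdaMin_le _ Λ hpsd).trans ?_
    rw [trace_eq_of_stationary K L c xc xs b η Λ hstat]
    have h1 := dotProduct_le_vecNorm b c hb
    have h2 := dotProduct_le_vecNorm b (xs - xc) hb
    gcongr
  rcases hpsd.trace_nonneg.eq_or_lt with h0 | h0
  · rw [← h0, zero_mul]
    exact hR
  · rw [mul_comm, ← le_div_iff₀ h0]
    refine Real.sSup_le ?_ (div_nonneg hR h0.le)
    rintro r ⟨b, hb1, rfl⟩
    rw [le_div_iff₀ h0, mul_comm]
    exact hb b hb1
end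
end
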